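/- The projectors D^{RC} satisfy D^{RC} D^{R'C'} = δ_{(R,C),(R',C')} D^{RC} for all pairs (C, R) and (C', R'), and Σ_C Σ_{R∈Irr(N_C)} D^{RC} = 1, the sum running over all conjugacy classes C of G and, for each C, over a complete set Irr(N_C) of pairwise inequivalent irreducible unitary matrix representations of N_C. -/

import Mathlib

/-!
For a finite group `H` and an irreducible unitary representation `R` of dimension `d`, the element
`e R = (d / |H|) ∑ h, conj (χ_R h) h` of `ℂ[H]` is central, hence acts on every irreducible unitary
representation `S` as a scalar, and character orthogonality identifies this scalar as `1` if
`χ_S = χ_R` and `0` otherwise. By Wedderburn's theorem and averaging, an element of `ℂ[H]` is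
determined by its action on the irreducible unitary representations, so over a complete system of
these the `e R` form a complete family of orthogonal idempotents of `ℂ[H]`.

For a conjugacy class `C` the elements `A (q i * m * (q i)⁻¹)` commute with the orthogonal
idempotents `B (c i)`. Therefore `m ↦ ∑ i, A (q i * m * (q i)⁻¹) * B (c i)` is multiplicative on
`N_C` and extends linearly to a non-unital homomorphism from `ℂ[N_C]`. It sends `1` to
`∑ i, B (c i)` and `e R` to `D^{RC}`. As `C` varies, the elements `∑ i, B (c i)` form a complete
orthogonal family, which settles the products and the sum across different classes.
-/

section UnitaryMatrixRepresentation

open Matrix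

variable {α H n p : Type*} [CommRing α] [StarRing α] [Group H] [Fintype n] [DecidableEq n]
  [Fintype p] [DecidableEq p] {R : H →* Matrix n n α} {S : H →* Matrix p p α}

theorem conjTranspose_apply_eq_apply_inv (hR : ∀ h, R h ∈ unitaryGroup n α) (h : H) :
    (R h)ᴴ = R h⁻¹ := by
  refine left_inv_eq_right_inv (mem_unitaryGroup_iff'.mp (hR h)) ?_
  rw [← map_mul, mul_inv_cancel, map_one]

theorem star_trace_apply_eq_trace_apply_inv (hR : ∀ h, R h ∈ unitaryGroup n α) (h : H) :
    star (trace (R h)) = trace (R h⁻¹) := by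
  rw [← trace_conjTranspose, conjTranspose_apply_eq_apply_inv hR]

theorem conjTranspose_intertwines (hR : ∀ h, R h ∈ unitaryGroup n α)
    (hS : ∀ h, S h ∈ unitaryGroup p α) {T : Matrix n p α} (hT : ∀ h, R h * T = T * S h) (h : H) :
    S h * Tᴴ = Tᴴ * R h := by
  have := congrArg conjTranspose (hT h⁻¹)
  simpa [conjTranspose_apply_eq_apply_inv hR, conjTranspose_apply_eq_apply_inv hS] using this.symm

end UnitaryMatrixRepresentation

section MatrixRepresentation

open Matrix Representation

variable {k H n p : Type*} [CommRing k] [Group H] [Fintype n] [DecidableEq n] [Fintype p]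
  [DecidableEq p]

/-- The representation on column vectors given by a matrix representation; it gives access to
Mathlib's characters and intertwining maps. -/
def matrixRepresentation (R : H →* Matrix n n k) : Representation k H (n → k) :=
  (toLinAlgEquiv' : Matrix n n k ≃ₐ[k] _).toAlgHom.toMonoidHom.comp R

theorem character_matrixRepresentation {k : Type*} [Field k] (R : H →* Matrix n n k) (h : H) :
    (matrixRepresentation R).character h = trace (R h) :=
  trace_toLin'_eq (R h)

theorem toMatrix'_intertwines {R : H →* Matrix n n k} {S : H →* Matrix p p k}
    (f : IntertwiningMap (matrixRepresentation R) (matrixRepresentation S)) (h : H) :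
    S h * f.toLinearMap.toMatrix' = f.toLinearMap.toMatrix' * R h := by
  apply toLin'.injective
  rw [toLin'_mul, toLin'_mul, toLin'_toMatrix']
  exact (f.isIntertwining' h).symm

end MatrixRepresentation

/-- Irreducible unitary matrix representations, with irreducibility expressed by the commutant
consisting of scalars only. Over `ℝ` this means absolute irreducibility. -/
structure IsUnitaryIrrep {𝕜 H n : Type*} [RCLike 𝕜] [Group H] [Fintype n] [DecidableEq n]
    (R : H →* Matrix n n 𝕜) : Prop where
  nonempty : Nonempty n
  mem_unitaryGroup : ∀ h, R h ∈ Matrix.unitaryGroup n 𝕜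
  eq_smul_one_of_commute : ∀ M, (∀ h, Commute (R h) M) → ∃ z : 𝕜, M = z • 1

namespace IsUnitaryIrrep

open Matrix Module Representation

variable {𝕜 H n p : Type*} [RCLike 𝕜] [Group H] [Fintype n] [DecidableEq n] [Fintype p]
  [DecidableEq p] {R : H →* Matrix n n 𝕜} {S : H →* Matrix p p 𝕜}

theorem trace_eq_of_intertwines (hR : IsUnitaryIrrep R) (hS : IsUnitaryIrrep S)
    {T : Matrix n p 𝕜} (hT : ∀ h, R h * T = T * S h) (hT0 : T ≠ 0) (h : H) :
    trace (R h) = trace (S h) := by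
  have hT' := conjTranspose_intertwines hR.mem_unitaryGroup hS.mem_unitaryGroup hT
  obtain ⟨z, hz⟩ := hR.eq_smul_one_of_commute (T * Tᴴ) fun h ↦ by
    rw [Commute, SemiconjBy, ← Matrix.mul_assoc, hT, Matrix.mul_assoc, hT', Matrix.mul_assoc]
  obtain ⟨w, hw⟩ := hS.eq_smul_one_of_commute (Tᴴ * T) fun h ↦ by
    rw [Commute, SemiconjBy, ← Matrix.mul_assoc, hT', Matrix.mul_assoc, hT, Matrix.mul_assoc]
  have hzw : z = w := smul_left_injective 𝕜 hT0 <| calc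
    z • T = T * Tᴴ * T := by simp [hz]
    _ = w • T := by simp [Matrix.mul_assoc, hw]
  have hz0 : z ≠ 0 := by
    rintro rfl
    open ComplexOrder in
    exact hT0 (self_mul_conjTranspose_eq_zero.mp (by rw [hz, zero_smul]))
  refine mul_left_cancel₀ hz0 ?_
  calc z * trace (R h) = trace (R h * (T * Tᴴ)) := by simp [hz]
    _ = trace (S h * (Tᴴ * T)) := by
      rw [← Matrix.mul_assoc, hT, Matrix.mul_assoc, trace_mul_comm, Matrix.mul_assoc]
    _ = z * trace (S h) := by simp [hw, hzw]

theorem finrank_intertwiningMap_self (hR : IsUnitaryIrrep R) :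
    finrank 𝕜 (IntertwiningMap (matrixRepresentation R) (matrixRepresentation R)) = 1 := by
  have := hR.nonempty
  refine finrank_eq_one (1 : IntertwiningMap _ _) (fun h ↦ ?_) fun f ↦ ?_
  · simpa using congr($h 1)
  · obtain ⟨z, hz⟩ := hR.eq_smul_one_of_commute _ (toMatrix'_intertwines f)
    refine ⟨z, IntertwiningMap.ext (LinearMap.toMatrix'.injective ?_)⟩
    rw [hz, ← LinearMap.toMatrix'_one, ← map_smul]
    rfl

theorem subsingleton_intertwiningMap (hR : IsUnitaryIrrep R) (hS : IsUnitaryIrrep S)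
    (hne : ¬ ∀ h, trace (R h) = trace (S h)) :
    Subsingleton (IntertwiningMap (matrixRepresentation S) (matrixRepresentation R)) := by
  refine subsingleton_of_forall_eq 0 fun f ↦ by_contra fun hf ↦ hne ?_
  refine hR.trace_eq_of_intertwines hS (toMatrix'_intertwines f) fun h ↦ hf ?_
  exact IntertwiningMap.ext (LinearMap.toMatrix'.injective (by simp [h]))

section Fintype

variable [Fintype H]

theorem sum_trace_mul_trace_inv_self (hR : IsUnitaryIrrep R) :
    ∑ h, trace (R h) * trace (R h⁻¹) = Fintype.card H := by
  have : Invertible (Nat.card H : 𝕜) := invertibleOfNonzero (by simp)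
  have horth := card_inv_mul_sum_char_mul_char_eq_finrank (matrixRepresentation R)
    (matrixRepresentation R)
  simp only [character_matrixRepresentation, hR.finrank_intertwiningMap_self] at horth
  rw [inv_mul_eq_iff_eq_mul₀ (by simp)] at horth
  simpa using horth

theorem sum_trace_mul_trace_inv_of_ne (hR : IsUnitaryIrrep R) (hS : IsUnitaryIrrep S)
    (hne : ¬ ∀ h, trace (R h) = trace (S h)) : ∑ h, trace (R h) * trace (S h⁻¹) = 0 := by
  have : Invertible (Nat.card H : 𝕜) := invertibleOfNonzero (by simp)
  have := hR.subsingleton_intertwiningMap hS hne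
  have horth := card_inv_mul_sum_char_mul_char_eq_finrank (matrixRepresentation S)
    (matrixRepresentation R)
  simpa [character_matrixRepresentation, finrank_zero_of_subsingleton] using horth

end Fintype

theorem of_lift_surjective [Nonempty n] (hR : ∀ h, R h ∈ unitaryGroup n 𝕜)
    (hsurj : Function.Surjective (MonoidAlgebra.lift 𝕜 (Matrix n n 𝕜) H R)) :
    IsUnitaryIrrep R where
  nonempty := ‹_›
  mem_unitaryGroup := hR
  eq_smul_one_of_commute M hM := by
    have hcomm (X : Matrix n n 𝕜) : Commute X M := by
      obtain ⟨x, rfl⟩ := hsurj X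
      induction x using MonoidAlgebra.induction_on with
      | of h => simpa using hM h
      | add x y hx hy => simpa using hx.add_left hy
      | smul z x hx => simpa using hx.smul_left z
    obtain ⟨z, rfl⟩ := mem_range_scalar_of_commute_single fun i j _ ↦ hcomm (single i j 1)
    exact ⟨z, by simp [smul_one_eq_diagonal]⟩

end IsUnitaryIrrep

section Separation

variable {H : Type*} [Group H] [Finite H]

theorem exists_algEquiv_forall_mem_unitary {A : Type*} [CStarAlgebra A] [PartialOrder A]
    [StarOrderedRing A] (R : H →* A) : ∃ f : A ≃ₐ[ℂ] A, ∀ h, f (R h) ∈ unitary A := by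
  classical
  cases nonempty_fintype H
  have hpos : IsStrictlyPositive (∑ h, star (R h) * R h) := by
    rw [← Finset.sum_erase_add _ _ (Finset.mem_univ 1)]
    exact .nonneg_add (Finset.sum_nonneg fun h _ ↦ star_mul_self_nonneg _) (by simp)
  have hinv (g : H) : star (R g) * (∑ h, star (R h) * R h) * R g = ∑ h, star (R h) * R h := by
    rw [Finset.mul_sum, Finset.sum_mul]
    exact Fintype.sum_equiv (Equiv.mulRight g) _ _ fun h ↦ by simp [mul_assoc]
  obtain ⟨_, ⟨u, rfl⟩, hu⟩ := CStarAlgebra.isStrictlyPositive_iff_eq_star_mul_self.mp hpos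
  rw [hu] at hinv
  refine ⟨MulSemiringAction.toAlgEquiv ℂ A (ConjAct.toConjAct u), fun h ↦ ?_⟩
  have hunit : IsUnit (u * R h * ↑u⁻¹ : A) :=
    (u.isUnit.mul (.map R (Group.isUnit h))).mul u⁻¹.isUnit
  refine hunit.mem_unitary_of_star_mul_self ?_
  calc star (u * R h * ↑u⁻¹ : A) * (u * R h * ↑u⁻¹)
      = star (↑u⁻¹ : A) * (star (R h) * (star (u : A) * u) * R h) * ↑u⁻¹ := by
        simp only [star_mul, mul_assoc]
    _ = star (u * ↑u⁻¹ : A) * (u * ↑u⁻¹) := by rw [hinv]; simp only [star_mul, mul_assoc]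
    _ = 1 := by simp

open scoped MonoidAlgebra Matrix.Norms.L2Operator MatrixOrder in
theorem eq_of_forall_isUnitaryIrrep_lift_eq {x y : ℂ[H]}
    (hxy : ∀ (d : ℕ) (R : H →* Matrix (Fin d) (Fin d) ℂ), IsUnitaryIrrep R →
      MonoidAlgebra.lift ℂ _ H R x = MonoidAlgebra.lift ℂ _ H R y) : x = y := by
  obtain ⟨k, d, _, ⟨e⟩⟩ := IsSemisimpleRing.exists_algEquiv_pi_matrix_of_isAlgClosed ℂ ℂ[H]
  refine e.injective (funext fun i ↦ ?_)
  let φ : ℂ[H] →ₐ[ℂ] Matrix (Fin (d i)) (Fin (d i)) ℂ :=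
    (Pi.evalAlgHom ℂ (fun i ↦ Matrix (Fin (d i)) (Fin (d i)) ℂ) i).comp e
  have hφ : Function.Surjective φ := (Function.surjective_eval i).comp e.surjective
  obtain ⟨f, hf⟩ := exists_algEquiv_forall_mem_unitary ((MonoidAlgebra.lift ℂ _ H).symm φ)
  let ψ : ℂ[H] →ₐ[ℂ] Matrix (Fin (d i)) (Fin (d i)) ℂ := (f : _ →ₐ[ℂ] _).comp φ
  have hlift : MonoidAlgebra.lift ℂ _ H ((MonoidAlgebra.lift ℂ _ H).symm ψ) = ψ :=
    Equiv.apply_symm_apply _ ψ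
  have hirrep : IsUnitaryIrrep ((MonoidAlgebra.lift ℂ _ H).symm ψ) :=
    .of_lift_surjective hf (by rw [hlift]; exact f.surjective.comp hφ)
  have hψ : ψ x = ψ y := by simpa only [hlift] using hxy _ _ hirrep
  exact f.injective hψ

end Separation

section CharIdempotent

open Matrix MonoidAlgebra

variable {𝕜 H n p : Type*} [RCLike 𝕜] [Group H] [Fintype H] [Fintype n] [DecidableEq n]
  [Fintype p] [DecidableEq p] {R : H →* Matrix n n 𝕜} {S : H →* Matrix p p 𝕜}

/-- The element `(d_R / |H|) ∑ h, conj (χ_R h) h` of the group algebra, which for irreducible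
unitary `R` over `ℂ` is the central idempotent projecting onto the `R`-isotypic component. -/
noncomputable def charIdempotent (R : H →* Matrix n n 𝕜) : 𝕜[H] :=
  ((Fintype.card n : 𝕜) / Fintype.card H) • ∑ h, single h (star (trace (R h)))

theorem of_commute_charIdempotent (R : H →* Matrix n n 𝕜) (g : H) :
    Commute (of 𝕜 H g) (charIdempotent R) := by
  refine Commute.smul_right ?_ _
  rw [Commute, SemiconjBy, Finset.mul_sum, Finset.sum_mul]
  refine Fintype.sum_equiv (MulAut.conj g).toEquiv _ _ fun h ↦ ?_
  have htrace : trace (R (g * h * g⁻¹)) = trace (R h) := by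
    rw [map_mul, trace_mul_comm, ← map_mul, inv_mul_cancel_left]
  simp [-map_mul, htrace]

theorem exists_lift_charIdempotent_eq_smul_one (hR : ∀ h, R h ∈ unitaryGroup n 𝕜)
    (hS : IsUnitaryIrrep S) :
    ∃ z : 𝕜, lift 𝕜 _ H S (charIdempotent R) = z • 1 ∧ z * Fintype.card p =
      Fintype.card n / Fintype.card H * ∑ h, trace (S h) * trace (R h⁻¹) := by
  obtain ⟨z, hz⟩ := hS.eq_smul_one_of_commute (lift 𝕜 _ H S (charIdempotent R)) fun g ↦ by
    simpa using (of_commute_charIdempotent R g).map (lift 𝕜 _ H S)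
  refine ⟨z, hz, ?_⟩
  calc z * Fintype.card p = trace (lift 𝕜 _ H S (charIdempotent R)) := by simp [hz]
    _ = _ := by simp [charIdempotent, trace_sum, star_trace_apply_eq_trace_apply_inv hR, mul_comm]

namespace IsUnitaryIrrep

theorem lift_charIdempotent_of_trace_eq (hR : IsUnitaryIrrep R) (hS : IsUnitaryIrrep S)
    (h : ∀ g, trace (S g) = trace (R g)) : lift 𝕜 _ H S (charIdempotent R) = 1 := by
  obtain ⟨z, hz, hzp⟩ := exists_lift_charIdempotent_eq_smul_one hR.mem_unitaryGroup hS
  have := hR.nonempty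
  have hcard : (Fintype.card p : 𝕜) = Fintype.card n := by simpa using h 1
  simp only [h, hR.sum_trace_mul_trace_inv_self, hcard] at hzp
  rw [div_mul_cancel₀ _ (by simp), mul_eq_right₀ (by simp)] at hzp
  rw [hz, hzp, one_smul]

theorem lift_charIdempotent_of_trace_ne (hR : IsUnitaryIrrep R) (hS : IsUnitaryIrrep S)
    (h : ¬ ∀ g, trace (S g) = trace (R g)) : lift 𝕜 _ H S (charIdempotent R) = 0 := by
  obtain ⟨z, hz, hzp⟩ := exists_lift_charIdempotent_eq_smul_one hR.mem_unitaryGroup hS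
  have := hS.nonempty
  rw [hS.sum_trace_mul_trace_inv_of_ne hR h, mul_zero] at hzp
  rw [hz, (mul_eq_zero_iff_right (by simp)).mp hzp, zero_smul]

end IsUnitaryIrrep

end CharIdempotent

/-- Complete systems of pairwise inequivalent irreducible unitary representations, with
equivalence of representations expressed by equality of characters. -/
structure IsCompleteIrrepSystem {H τ : Type*} [Group H] {n : τ → Type*} [∀ t, Fintype (n t)]
    [∀ t, DecidableEq (n t)] (R : ∀ t, H →* Matrix (n t) (n t) ℂ) : Prop where
  isUnitaryIrrep : ∀ t, IsUnitaryIrrep (R t)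
  eq_of_trace_eq : ∀ t t', (∀ h, (R t h).trace = (R t' h).trace) → t = t'
  exists_trace_eq : ∀ (d : ℕ) (S : H →* Matrix (Fin d) (Fin d) ℂ), IsUnitaryIrrep S →
    ∃ t, ∀ h, (S h).trace = (R t h).trace

namespace IsCompleteIrrepSystem

open MonoidAlgebra

variable {H τ : Type*} [Group H] [Fintype H] {n : τ → Type*} [∀ t, Fintype (n t)]
  [∀ t, DecidableEq (n t)] {R : ∀ t, H →* Matrix (n t) (n t) ℂ}

theorem exists_lift_charIdempotent_eq_ite [DecidableEq τ] (hR : IsCompleteIrrepSystem R) {d : ℕ}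
    {S : H →* Matrix (Fin d) (Fin d) ℂ} (hS : IsUnitaryIrrep S) :
    ∃ t₀, ∀ t, lift ℂ _ H S (charIdempotent (R t)) = if t = t₀ then 1 else 0 := by
  obtain ⟨t₀, ht₀⟩ := hR.exists_trace_eq d S hS
  refine ⟨t₀, fun t ↦ ?_⟩
  split_ifs with h
  · subst h
    exact (hR.isUnitaryIrrep t).lift_charIdempotent_of_trace_eq hS ht₀
  · refine (hR.isUnitaryIrrep t).lift_charIdempotent_of_trace_ne hS fun ht ↦ h ?_
    exact hR.eq_of_trace_eq t t₀ fun g ↦ by rw [← ht, ht₀]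

theorem completeOrthogonalIdempotents_charIdempotent [Fintype τ] (hR : IsCompleteIrrepSystem R) :
    CompleteOrthogonalIdempotents fun t ↦ charIdempotent (R t) := by
  classical
  refine ⟨OrthogonalIdempotents.iff_mul_eq.mpr fun t t' ↦ ?_, ?_⟩
  · refine eq_of_forall_isUnitaryIrrep_lift_eq fun d S hS ↦ ?_
    obtain ⟨t₀, ht₀⟩ := hR.exists_lift_charIdempotent_eq_ite hS
    rw [map_mul, apply_ite (lift ℂ _ H S), map_zero, ht₀, ht₀]
    split_ifs <;> simp_all
  · refine eq_of_forall_isUnitaryIrrep_lift_eq fun d S hS ↦ ?_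
    obtain ⟨t₀, ht₀⟩ := hR.exists_lift_charIdempotent_eq_ite hS
    simp [ht₀]

end IsCompleteIrrepSystem

section Idempotents

variable {κ S : Type*} [Semiring S]

theorem completeOrthogonalIdempotents_sum_sigma [Fintype κ] {ι : κ → Type*}
    [∀ k, Fintype (ι k)] {e : (Σ k, ι k) → S} (he : CompleteOrthogonalIdempotents e) :
    CompleteOrthogonalIdempotents fun k ↦ ∑ i, e ⟨k, i⟩ where
  idem k := by
    simpa using he.isIdempotentElem_sum (s := Finset.univ.map (Function.Embedding.sigmaMk k))
  ortho k l hkl := by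
    dsimp only
    rw [Finset.sum_mul_sum]
    exact Finset.sum_eq_zero fun i _ ↦ Finset.sum_eq_zero fun j _ ↦ he.ortho (by simp [hkl])
  complete := by rw [← Fintype.sum_sigma, he.complete]

theorem completeOrthogonalIdempotents_sigma_map [Fintype κ] {T τ : κ → Type*}
    [∀ k, Semiring (T k)] [∀ k, Fintype (τ k)] (f : ∀ k, T k →ₙ+* S)
    (hf : CompleteOrthogonalIdempotents fun k ↦ f k 1) {e : ∀ k, τ k → T k}
    (he : ∀ k, CompleteOrthogonalIdempotents (e k)) :
    CompleteOrthogonalIdempotents fun x : Σ k, τ k ↦ f x.1 (e x.1 x.2) where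
  idem x := by
    rw [IsIdempotentElem, ← map_mul, (he x.1).idem x.2]
  ortho := by
    rintro ⟨k, t⟩ ⟨l, u⟩ hne
    obtain rfl | hkl := eq_or_ne k l
    · have htu : t ≠ u := fun h ↦ hne (by rw [h])
      dsimp only
      rw [← map_mul, (he k).ortho htu, map_zero]
    · calc f k (e k t) * f l (e l u) = f k (e k t) * (f k 1 * f l 1) * f l (e l u) := by
            rw [← mul_assoc, ← map_mul, mul_assoc, ← map_mul, mul_one, one_mul]
        _ = 0 := by rw [hf.ortho hkl, mul_zero, zero_mul]
  complete := by
    rw [Fintype.sum_sigma, ← hf.complete]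
    exact Finset.sum_congr rfl fun k _ ↦ by rw [← (he k).complete, map_sum]

/-- The sum of the multiplicative maps `a i` cut down by orthogonal idempotents `b i` commuting
with their values. It preserves products, but not `1`, as the `b i` need not sum to `1`. -/
def sumMulHom {ι M : Type*} [Fintype ι] [Mul M] (a : ι → M →ₙ* S) (b : ι → S)
    (hb : OrthogonalIdempotents b) (hab : ∀ i m, Commute (a i m) (b i)) : M →ₙ* S where
  toFun m := ∑ i, a i m * b i
  map_mul' m m' := by
    classical
    have hmul (i j : ι) :
        a i m * b i * (a j m' * b j) = if i = j then a i (m * m') * b i else 0 := by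
      rw [(hab j m').eq, mul_assoc, ← mul_assoc (b i), hb.mul_eq]
      split_ifs with h
      · subst h
        rw [← (hab i m').eq, map_mul, mul_assoc]
      · rw [zero_mul, mul_zero]
    simp [Finset.sum_mul_sum, hmul]

end Idempotents

theorem liftMagma_single {k M A : Type*} [Semiring k] [Mul M] [NonUnitalNonAssocSemiring A]
    [Module k A] [IsScalarTower k A A] [SMulCommClass k A A] (f : M →ₙ* A) (m : M) (a : k) :
    MonoidAlgebra.liftMagma k f (.single m a) = a • f m := by
  simp

theorem bijective_sigma_of_isConj_iff_exists {G κ : Type*} [Monoid G] {ι : κ → Type*} {r : κ → G}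
    {c : ∀ k, ι k → G} (hdistinct : ∀ k k', IsConj (r k) (r k') → k = k')
    (hcomplete : ∀ g, ∃ k, IsConj (r k) g) (hinj : ∀ k, Function.Injective (c k))
    (hclass : ∀ k g, IsConj (r k) g ↔ ∃ i, c k i = g) :
    Function.Bijective fun x : Σ k, ι k ↦ c x.1 x.2 := by
  have hconj (k) (i) : IsConj (r k) (c k i) := (hclass k _).mpr ⟨i, rfl⟩
  refine ⟨?_, fun g ↦ ?_⟩
  · rintro ⟨k, i⟩ ⟨l, j⟩ (h : c k i = c l j)
    obtain rfl := hdistinct k l ((hconj k i).trans (h ▸ (hconj l j).symm))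
    rw [hinj k h]
  · obtain ⟨k, hk⟩ := hcomplete g
    obtain ⟨i, hi⟩ := (hclass k g).mp hk
    exact ⟨⟨k, i⟩, hi⟩

/-- The Wigner projector `D^{RC}` of the conjugacy class `C` consisting of the elements
`q i * r * (q i)⁻¹` and the representation `R` of `N`, the centralizer of `r` in applications. -/
noncomputable def wignerProjector {G 𝒜 ι n : Type*} [Group G] [Semiring 𝒜] [Algebra ℂ 𝒜]
    [Fintype ι] [Fintype n] [DecidableEq n] (A : G → 𝒜) (B : G → 𝒜) (r : G) (q : ι → G)
    {N : Subgroup G} [Fintype N] (R : N →* Matrix n n ℂ) : 𝒜 :=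
  ((Fintype.card n : ℂ) / Fintype.card N) •
    ∑ m : N, star (R m).trace • ∑ i, A (q i * m * (q i)⁻¹) * B (q i * r * (q i)⁻¹)

/-- The quantum double relations between the gauge transformations `A h` and the flux projectors
`B g`. The involution on the algebra is left out. -/
structure IsQuantumDoubleRep {G 𝒜 : Type*} [Group G] [Fintype G] [Semiring 𝒜] (A : G →* 𝒜)
    (B : G → 𝒜) : Prop where
  completeOrthogonalIdempotents : CompleteOrthogonalIdempotents B
  mul_eq_conj_mul : ∀ h g, A h * B g = B (h * g * h⁻¹) * A h

namespace IsQuantumDoubleRep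

open MonoidAlgebra

variable {G 𝒜 ι : Type*} [Group G] [Fintype G] [Semiring 𝒜] [Fintype ι] {A : G →* 𝒜} {B : G → 𝒜}
  {r : G} {q : ι → G} {N : Subgroup G}

theorem commute (h : IsQuantumDoubleRep A B) {g c : G} (hgc : Commute g c) :
    Commute (A g) (B c) := by
  rw [Commute, SemiconjBy, h.mul_eq_conj_mul, hgc.eq, mul_inv_cancel_right]

/-- The multiplicative map `m ↦ ∑ i, A (q i * m * (q i)⁻¹) * B (q i * r * (q i)⁻¹)` attached to
the conjugacy class of `r`; its linear extension sends `charIdempotent R` to the Wigner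
projector. -/
def classHom (h : IsQuantumDoubleRep A B) (hq : Function.Injective fun i ↦ q i * r * (q i)⁻¹)
    (hN : N ≤ Subgroup.centralizer {r}) : N →ₙ* 𝒜 :=
  sumMulHom (fun i ↦ (A.comp ((MulAut.conj (q i)).toMonoidHom.comp N.subtype)).toMulHom)
    (fun i ↦ B (q i * r * (q i)⁻¹))
    (h.completeOrthogonalIdempotents.embedding ⟨_, hq⟩)
    fun i m ↦ h.commute <|
      have hmr : Commute (m : G) r := Subgroup.mem_centralizer_singleton_iff.mp (hN m.2)
      hmr.map (MulAut.conj (q i))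

theorem classHom_apply (h : IsQuantumDoubleRep A B)
    (hq : Function.Injective fun i ↦ q i * r * (q i)⁻¹) (hN : N ≤ Subgroup.centralizer {r})
    (m : N) : h.classHom hq hN m = ∑ i, A (q i * m * (q i)⁻¹) * B (q i * r * (q i)⁻¹) :=
  rfl

theorem liftMagma_classHom_one [Algebra ℂ 𝒜] (h : IsQuantumDoubleRep A B)
    (hq : Function.Injective fun i ↦ q i * r * (q i)⁻¹) (hN : N ≤ Subgroup.centralizer {r}) :
    liftMagma ℂ (h.classHom hq hN) 1 = ∑ i, B (q i * r * (q i)⁻¹) := by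
  rw [one_def, liftMagma_single, one_smul, classHom_apply]
  simp only [OneMemClass.coe_one, mul_one, mul_inv_cancel, map_one, one_mul]

theorem liftMagma_classHom_charIdempotent [Algebra ℂ 𝒜] (h : IsQuantumDoubleRep A B)
    (hq : Function.Injective fun i ↦ q i * r * (q i)⁻¹) (hN : N ≤ Subgroup.centralizer {r})
    [Fintype N] {n : Type*} [Fintype n] [DecidableEq n] (R : N →* Matrix n n ℂ) :
    liftMagma ℂ (h.classHom hq hN) (charIdempotent R) = wignerProjector A B r q R := by
  simp only [wignerProjector, charIdempotent, map_smul, map_sum, liftMagma_single, classHom_apply]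

end IsQuantumDoubleRep

theorem quantum_double_Wigner_projectors_complete_general {G 𝒜 κ : Type*} [Group G] [Fintype G]
    [Semiring 𝒜] [Algebra ℂ 𝒜] [Fintype κ] {A : G →* 𝒜} {B : G → 𝒜} (hAB : IsQuantumDoubleRep A B)
    {ι : κ → Type*} [∀ k, Fintype (ι k)] {r : κ → G} {q : ∀ k, ι k → G}
    (hclass : Function.Bijective fun x : Σ k, ι k ↦ q x.1 x.2 * r x.1 * (q x.1 x.2)⁻¹)
    {N : κ → Subgroup G} [∀ k, Fintype (N k)] (hN : ∀ k, N k ≤ Subgroup.centralizer {r k})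
    {τ : κ → Type*} [∀ k, Fintype (τ k)] {n : ∀ k, τ k → Type*} [∀ k t, Fintype (n k t)]
    [∀ k t, DecidableEq (n k t)] {R : ∀ k t, N k →* Matrix (n k t) (n k t) ℂ}
    (hR : ∀ k, IsCompleteIrrepSystem (R k)) :
    CompleteOrthogonalIdempotents fun x : Σ k, τ k ↦
      wignerProjector A B (r x.1) (q x.1) (R x.1 x.2) := by
  have hq (k : κ) : Function.Injective fun i ↦ q k i * r k * (q k i)⁻¹ :=
    hclass.injective.comp sigma_mk_injective
  have hflux : CompleteOrthogonalIdempotents fun k ↦ ∑ i, B (q k i * r k * (q k i)⁻¹) :=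
    completeOrthogonalIdempotents_sum_sigma <|
      (CompleteOrthogonalIdempotents.equiv (.ofBijective _ hclass)).mpr
        hAB.completeOrthogonalIdempotents
  let f (k : κ) := MonoidAlgebra.liftMagma ℂ (hAB.classHom (hq k) (hN k))
  have hone : CompleteOrthogonalIdempotents fun k ↦ f k 1 := by
    simpa only [f, hAB.liftMagma_classHom_one (hq _) (hN _)] using hflux
  simpa only [← hAB.liftMagma_classHom_charIdempotent (hq _) (hN _)] using!
    completeOrthogonalIdempotents_sigma_map (fun k ↦ (f k : _ →ₙ+* 𝒜)) hone
      fun k ↦ (hR k).completeOrthogonalIdempotents_charIdempotent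

/-- The projectors `D^{RC}` (over all conjugacy classes `C` of `G` and all
irreducible unitary representations `R` of `N_C` from a complete set `Irr(N_C)` of pairwise
inequivalent ones) satisfy `D^{RC} D^{R'C'} = δ_{(R,C),(R',C')} D^{RC}` and sum to `1`.
Conjugacy classes are encoded by a complete family `r : Fin K → G` of pairwise non-conjugate
representatives; inequivalence and completeness of the irreducible representations are encoded
through characters (two irreducible complex representations of a finite group are equivalent
iff they have the same character). -/
theorem quantum_double_Wigner_projectors_complete
    {G : Type*} [Group G] [Fintype G] [DecidableEq G]
    {𝒜 : Type*} [Ring 𝒜] [Algebra ℂ 𝒜] [StarRing 𝒜] [StarModule ℂ 𝒜]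
    (A B : G → 𝒜)
    (hA1 : A 1 = 1)
    (hAmul : ∀ h h' : G, A h * A h' = A (h * h'))
    (hAstar : ∀ h : G, star (A h) = A h⁻¹)
    (hBstar : ∀ g : G, star (B g) = B g)
    (hBmul : ∀ g g' : G, B g * B g' = if g = g' then B g else 0)
    (hBsum : ∑ g : G, B g = 1)
    (hAB : ∀ h g : G, A h * B g = B (h * g * h⁻¹) * A h)
    -- a complete set `r k` of representatives of the conjugacy classes of `G`
    (K : ℕ) (r : Fin K → G)
    (hrdistinct : ∀ k k', IsConj (r k) (r k') → k = k')
    (hrcomplete : ∀ g : G, ∃ k, IsConj (r k) g)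
    -- for each class: its elements `c k i` and iterators `q k i`
    (nC : Fin K → ℕ) (c : ∀ k, Fin (nC k) → G) (q : ∀ k, Fin (nC k) → G)
    (hcinj : ∀ k, Function.Injective (c k))
    (hcclass : ∀ k (g : G), IsConj (r k) g ↔ ∃ i, c k i = g)
    (hq : ∀ k i, c k i = q k i * r k * (q k i)⁻¹)
    -- the centralizers `N_C`
    (N : Fin K → Subgroup G) [∀ k, Fintype (N k)]
    (hN : ∀ k, N k = Subgroup.centralizer {r k})
    -- a complete set of pairwise inequivalent irreducible unitary representations of each `N_C`
    (nI : Fin K → ℕ) (d : ∀ k, Fin (nI k) → ℕ) (hd : ∀ k t, 0 < d k t)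
    (R : ∀ k, ∀ t : Fin (nI k), N k →* Matrix (Fin (d k t)) (Fin (d k t)) ℂ)
    (hRunitary : ∀ k t m, R k t m * star (R k t m) = 1)
    (hRirr : ∀ k t (M : Matrix (Fin (d k t)) (Fin (d k t)) ℂ),
      (∀ m, R k t m * M = M * R k t m) → ∃ z : ℂ, M = z • 1)
    (hRdistinct : ∀ k (t t' : Fin (nI k)),
      (∀ m, Matrix.trace (R k t m) = Matrix.trace (R k t' m)) → t = t')
    (hRcomplete : ∀ k (d' : ℕ), 0 < d' →
      ∀ R' : N k →* Matrix (Fin d') (Fin d') ℂ,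
        (∀ m, R' m * star (R' m) = 1) →
        (∀ M : Matrix (Fin d') (Fin d') ℂ,
          (∀ m, R' m * M = M * R' m) → ∃ z : ℂ, M = z • 1) →
        ∃ t, ∀ m, Matrix.trace (R' m) = Matrix.trace (R k t m))
    -- the Wigner projectors `D^{RC}`
    (D : ∀ k, Fin (nI k) → 𝒜)
    (hD : ∀ k t, D k t = ((d k t : ℂ) / (Fintype.card (N k) : ℂ)) •
      ∑ m : N k, star (Matrix.trace (R k t m)) •
        ∑ i : Fin (nC k), A (q k i * (m : G) * (q k i)⁻¹) * B (c k i)) :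
    (∀ k t k' t', D k t * D k' t' =
      if (⟨k, t⟩ : Σ k, Fin (nI k)) = ⟨k', t'⟩ then D k t else 0) ∧
    ∑ x : Σ k, Fin (nI k), D x.1 x.2 = 1 := by
  have hAB' : IsQuantumDoubleRep (⟨⟨A, hA1⟩, fun h h' ↦ (hAmul h h').symm⟩ : G →* 𝒜) B :=
    ⟨⟨OrthogonalIdempotents.iff_mul_eq.mpr hBmul, hBsum⟩, hAB⟩
  have hclass := bijective_sigma_of_isConj_iff_exists hrdistinct hrcomplete hcinj hcclass
  have hR (k : Fin K) : IsCompleteIrrepSystem (R k) :=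
    { isUnitaryIrrep := fun t ↦ ⟨⟨0, hd k t⟩,
        fun m ↦ Matrix.mem_unitaryGroup_iff.mpr (hRunitary k t m), hRirr k t⟩
      eq_of_trace_eq := hRdistinct k
      exists_trace_eq := fun d' R' hR' ↦ hRcomplete k d' (Fin.pos_iff_nonempty.mpr hR'.nonempty) R'
        (fun m ↦ Matrix.mem_unitaryGroup_iff.mp (hR'.mem_unitaryGroup m))
        hR'.eq_smul_one_of_commute }
  have hDeq : D = fun k t ↦ wignerProjector A B (r k) (q k) (R k t) := by
    ext k t
    simp only [hD, hq, wignerProjector, Fintype.card_fin]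
  simp only [hq] at hclass
  have hcomplete : CompleteOrthogonalIdempotents fun x : Σ k, Fin (nI k) ↦ D x.1 x.2 :=
    hDeq ▸ quantum_double_Wigner_projectors_complete_general hAB' hclass (fun k ↦ (hN k).le) hR
  exact ⟨fun k t k' t' ↦ hcomplete.mul_eq ⟨k, t⟩ ⟨k', t'⟩, hcomplete.complete⟩
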